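/- Let S be a monoid, T a finite monoid, and A a right (S × T)-act. Then A is a right S-act under the action a·s = a(s, 1_T), and: (i) A is finitely generated as a right S-act if and only if A is finitely generated as a right (S × T)-act; (ii) A is finitely presented as a right S-act if and only if A is finitely presented as a right (S × T)-act. -/

import Mathlib

def ActFG {M A : Type*} [Monoid M] (act : A → M → A) : Prop :=
  ∃ X : Finset A, ∀ a : A, ∃ x ∈ X, ∃ s : M, a = act x s

def IsActCong {M A : Type*} [Monoid M] (act : A → M → A) (r : A → A → Prop) : Prop :=
  Equivalence r ∧ ∀ a b : A, r a b → ∀ s : M, r (act a s) (act b s)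

def ActCongGenBy {M A : Type*} [Monoid M] (act : A → M → A) (H : Set (A × A))
    (r : A → A → Prop) : Prop :=
  IsActCong act r ∧ (∀ p ∈ H, r p.1 p.2) ∧
    ∀ r' : A → A → Prop, IsActCong act r' → (∀ p ∈ H, r' p.1 p.2) →
      ∀ a b : A, r a b → r' a b

def ActFGCong {M A : Type*} [Monoid M] (act : A → M → A) (r : A → A → Prop) : Prop :=
  ∃ H : Set (A × A), H.Finite ∧ ActCongGenBy act H r

def ActFP {M A : Type*} [Monoid M] (act : A → M → A) : Prop :=
  ∃ (n : ℕ) (r : (Fin n × M) → (Fin n × M) → Prop),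
    ActFGCong (fun (p : Fin n × M) (s : M) => (p.1, p.2 * s)) r ∧
    ∃ φ : Fin n × M → A, Function.Surjective φ ∧
      (∀ (p : Fin n × M) (s : M), φ (p.1, p.2 * s) = act (φ p) s) ∧
      ∀ p q : Fin n × M, φ p = φ q ↔ r p q

/-!
Everything happens along a monoid homomorphism `f : S →* M` for which `M`, with `m · s = m * f s`,
is a finitely presented right `S`-act; for `S → S × T` this act is free on the finite set `T`.

If `Y` generates `M` over `S`, then generators `X` over `M` become generators `XY` over `S`, and
generating pairs `(a, b)` of an `M`-congruence become generating pairs `(ay, by)` of the same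
relation as an `S`-congruence. Hence `A = F_M(X)/τ` is over `S` a quotient of the finitely presented
act `F_M(X)` by a finitely generated congruence. Conversely, if `A = F_S(X)/ρ` then `A` is a
quotient of `F_M(X)`, and besides the generators of `ρ` it suffices to impose, for each of the
finitely many `(x, y)`, one relation equating it with an element of the image of `F_S(X)`.
-/

/-- Homomorphisms of right acts, that is, maps commuting with the actions. -/
def IsActHom {M A B : Type*} (actA : A → M → A) (actB : B → M → B) (φ : A → B) : Prop :=
  ∀ (a : A) (s : M), φ (actA a s) = actB (φ a) s

/-- The free right `M`-act on `X`, in the form in which it enters `ActFP`. -/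
abbrev freeAct (X M : Type*) [Monoid M] : X × M → M → X × M :=
  fun p s ↦ (p.1, p.2 * s)

theorem freeAct_one {X M : Type*} [Monoid M] (p : X × M) : freeAct X M p 1 = p := by
  simp only [freeAct, mul_one]

theorem freeAct_mul {X M : Type*} [Monoid M] (p : X × M) (s t : M) :
    freeAct X M p (s * t) = freeAct X M (freeAct X M p s) t := by
  simp only [freeAct, mul_assoc]

/-- Restriction of scalars: the right `S`-act obtained from a right `M`-act along `f`. -/
abbrev restrictAct {S M A : Type*} [Monoid S] [Monoid M] (f : S →* M) (act : A → M → A) :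
    A → S → A :=
  fun a s ↦ act a (f s)

theorem IsActHom.comp {M A B C : Type*} {actA : A → M → A} {actB : B → M → B}
    {actC : C → M → C} {φ : B → A} {ψ : C → B} (hφ : IsActHom actB actA φ)
    (hψ : IsActHom actC actB ψ) : IsActHom actC actA (φ ∘ ψ) := fun c s ↦ by
  simp only [Function.comp_apply, hψ c s, hφ (ψ c) s]

section Congruences

variable {M A B C : Type*} [Monoid M] {actA : A → M → A} {actB : B → M → B} {actC : C → M → C}

theorem IsActHom.isActCong_ker {φ : B → A} (hφ : IsActHom actB actA φ) :
    IsActCong actB (Setoid.ker φ) :=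
  ⟨(Setoid.ker φ).iseqv, fun a b (hab : φ a = φ b) s ↦
    show φ (actB a s) = φ (actB b s) by rw [hφ, hφ, hab]⟩

theorem IsActCong.comap {r : A → A → Prop} (hr : IsActCong actA r) {φ : B → A}
    (hφ : IsActHom actB actA φ) : IsActCong actB (fun a b ↦ r (φ a) (φ b)) :=
  ⟨hr.1.comap φ, fun a b hab s ↦ by simpa only [hφ a s, hφ b s] using hr.2 _ _ hab s⟩

theorem IsActCong.of_comap_surjInv {r : C → C → Prop} (hr : IsActCong actC r) {ψ : C → B}
    (hψ : IsActHom actC actB ψ) (hsurj : Function.Surjective ψ)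
    (hker : ∀ a b, ψ a = ψ b → r a b) :
    IsActCong actB
      (fun a b ↦ r (Function.surjInv hsurj a) (Function.surjInv hsurj b)) := by
  let σ := Function.surjInv hsurj
  have hσ : ∀ b s, r (σ (actB b s)) (actC (σ b) s) := fun b s ↦
    hker _ _ (by simp only [σ, hψ (σ b) s, Function.surjInv_eq])
  exact ⟨hr.1.comap σ, fun a b hab s ↦
    hr.1.trans (hσ a s) (hr.1.trans (hr.2 _ _ hab s) (hr.1.symm (hσ b s)))⟩

theorem actFGCong_ker_of_injective {φ : B → A} (hφ : IsActHom actB actA φ)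
    (hinj : Function.Injective φ) : ActFGCong actB (Setoid.ker φ) :=
  ⟨∅, Set.finite_empty, hφ.isActCong_ker, by simp, fun _ hr _ a b hab ↦
    hinj hab ▸ hr.1.refl a⟩

theorem ActFGCong.ker_comp {φ : B → A} {ψ : C → B} (hφ : IsActHom actB actA φ)
    (hψ : IsActHom actC actB ψ) (hsurj : Function.Surjective ψ)
    (hφker : ActFGCong actB (Setoid.ker φ)) (hψker : ActFGCong actC (Setoid.ker ψ)) :
    ActFGCong actC (Setoid.ker (φ ∘ ψ)) := by
  obtain ⟨H, hH, -, hHφ, hφmin⟩ := hφker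
  obtain ⟨K, hK, -, hKψ, hψmin⟩ := hψker
  let σ := Function.surjInv hsurj
  have hψσ : ∀ b, ψ (σ b) = b := Function.surjInv_eq hsurj
  refine ⟨K ∪ Prod.map σ σ '' H, hK.union (hH.image _), (hφ.comp hψ).isActCong_ker, ?_, ?_⟩
  · rintro _ (hp | ⟨p, hp, rfl⟩)
    · exact congrArg φ (hKψ _ hp)
    · change φ (ψ (σ p.1)) = φ (ψ (σ p.2))
      rw [hψσ, hψσ]
      exact hHφ p hp
  · intro r hr hsub a b hab
    have hker : ∀ a b, ψ a = ψ b → r a b := hψmin r hr fun p hp ↦ hsub p (.inl hp)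
    have hlift : r (σ (ψ a)) (σ (ψ b)) :=
      hφmin _ (hr.of_comap_surjInv hψ hsurj hker)
        (fun p hp ↦ hsub _ (.inr ⟨p, hp, rfl⟩)) _ _ hab
    exact hr.1.trans (hker _ _ (hψσ _).symm) (hr.1.trans hlift (hker _ _ (hψσ _)))

end Congruences

section FinitePresentation

variable {M A B : Type*} [Monoid M] {actA : A → M → A} {actB : B → M → B}

theorem actFP_iff_exists_surjective :
    ActFP actA ↔ ∃ (n : ℕ) (φ : Fin n × M → A), IsActHom (freeAct (Fin n) M) actA φ ∧
      Function.Surjective φ ∧ ActFGCong (freeAct (Fin n) M) (Setoid.ker φ) := by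
  constructor
  · rintro ⟨n, r, hr, φ, hsurj, hφ, hker⟩
    obtain rfl : ⇑(Setoid.ker φ) = r := funext₂ fun p q ↦ propext (hker p q)
    exact ⟨n, φ, hφ, hsurj, hr⟩
  · rintro ⟨n, φ, hφ, hsurj, hker⟩
    exact ⟨n, Setoid.ker φ, hker, φ, hsurj, hφ, fun _ _ ↦ Iff.rfl⟩

theorem ActFP.actFG (h : ActFP actA) : ActFG actA := by
  classical
  obtain ⟨n, φ, hφ, hsurj, -⟩ := actFP_iff_exists_surjective.1 h
  refine ⟨Finset.univ.image fun i ↦ φ (i, 1), hsurj.forall.2 fun ⟨i, s⟩ ↦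
    ⟨φ (i, 1), Finset.mem_image_of_mem _ (Finset.mem_univ i), s, ?_⟩⟩
  simpa only [freeAct, one_mul] using hφ (i, 1) s

theorem ActFP.of_surjective (hB : ActFP actB) {φ : B → A} (hφ : IsActHom actB actA φ)
    (hsurj : Function.Surjective φ) (hker : ActFGCong actB (Setoid.ker φ)) : ActFP actA := by
  obtain ⟨n, ψ, hψ, hψsurj, hψker⟩ := actFP_iff_exists_surjective.1 hB
  exact actFP_iff_exists_surjective.2
    ⟨n, φ ∘ ψ, hφ.comp hψ, hsurj.comp hψsurj, hker.ker_comp hφ hψ hψsurj hψker⟩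

theorem ActFP.of_bijective (hB : ActFP actB) {φ : B → A} (hφ : IsActHom actB actA φ)
    (hbij : Function.Bijective φ) : ActFP actA :=
  hB.of_surjective hφ hbij.2 (actFGCong_ker_of_injective hφ hbij.1)

theorem actFP_freeAct (ι M : Type*) [Finite ι] [Monoid M] : ActFP (freeAct ι M) := by
  obtain ⟨n, ⟨e⟩⟩ := Finite.exists_equiv_fin ι
  let φ : Fin n × M ≃ ι × M := e.symm.prodCongr (Equiv.refl M)
  have hφ : IsActHom (freeAct (Fin n) M) (freeAct ι M) φ := fun _ _ ↦ rfl
  exact actFP_iff_exists_surjective.2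
    ⟨n, φ, hφ, φ.surjective, actFGCong_ker_of_injective hφ φ.injective⟩

theorem ActFP.finite_copower (ι : Type*) [Finite ι] (h : ActFP actA) :
    ActFP (fun (p : ι × A) (s : M) ↦ (p.1, actA p.2 s)) := by
  obtain ⟨n, ψ, hψ, hsurj, H, hH, -, hHψ, hmin⟩ := actFP_iff_exists_surjective.1 h
  let inc : ι → Fin n × M → (ι × Fin n) × M := fun i p ↦ ((i, p.1), p.2)
  let φ : (ι × Fin n) × M → ι × A := fun p ↦ (p.1.1, ψ (p.1.2, p.2))
  have hφ : IsActHom (freeAct (ι × Fin n) M) (fun (p : ι × A) s ↦ (p.1, actA p.2 s)) φ :=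
    fun p s ↦ congrArg (Prod.mk p.1.1) (hψ (p.1.2, p.2) s)
  refine (actFP_freeAct (ι × Fin n) M).of_surjective hφ ?_
    ⟨⋃ i, Prod.map (inc i) (inc i) '' H, Set.finite_iUnion fun i ↦ hH.image _,
      hφ.isActCong_ker, ?_, ?_⟩
  · rintro ⟨i, a⟩
    obtain ⟨p, rfl⟩ := hsurj a
    exact ⟨inc i p, rfl⟩
  · intro p hp
    obtain ⟨i, q, hq, rfl⟩ := Set.mem_iUnion.1 hp
    exact congrArg (Prod.mk i) (hHψ q hq)
  · rintro r hr hsub ⟨⟨i, x⟩, s⟩ ⟨⟨j, y⟩, t⟩ hpq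
    obtain ⟨rfl, hxy⟩ : i = j ∧ ψ (x, s) = ψ (y, t) := Prod.ext_iff.1 hpq
    exact hmin _ (hr.comap (φ := inc i) fun _ _ ↦ rfl)
      (fun q hq ↦ hsub _ (Set.mem_iUnion.2 ⟨i, q, hq, rfl⟩)) _ _ hxy

end FinitePresentation

section RestrictionOfScalars

variable {S M A B C : Type*} [Monoid S] [Monoid M] {f : S →* M} {actA : A → M → A}
  {actB : B → M → B} {actC : C → S → C}

theorem ActFG.of_restrictAct (h : ActFG (restrictAct f actA)) : ActFG actA := by
  obtain ⟨X, hX⟩ := h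
  exact ⟨X, fun a ↦ let ⟨x, hx, s, hs⟩ := hX a; ⟨x, hx, f s, hs⟩⟩

theorem ActFG.restrictScalars (h : ActFG actA) (hf : ActFG (fun (m : M) (s : S) ↦ m * f s))
    (hmul : ∀ (a : A) (m n : M), actA a (m * n) = actA (actA a m) n) :
    ActFG (restrictAct f actA) := by
  classical
  obtain ⟨Y, hY⟩ := hf
  obtain ⟨X, hX⟩ := h
  refine ⟨Finset.image₂ actA X Y, fun a ↦ ?_⟩
  obtain ⟨x, hx, m, rfl⟩ := hX a
  obtain ⟨y, hy, s, rfl⟩ := hY m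
  exact ⟨actA x y, Finset.mem_image₂_of_mem hx hy, s, hmul x y (f s)⟩

theorem ActFGCong.restrictScalars {r : A → A → Prop} (hr : ActFGCong actA r)
    (hf : ActFG (fun (m : M) (s : S) ↦ m * f s)) (hone : ∀ a : A, actA a 1 = a)
    (hmul : ∀ (a : A) (m n : M), actA a (m * n) = actA (actA a m) n) :
    ActFGCong (restrictAct f actA) r := by
  obtain ⟨Y, hY⟩ := hf
  obtain ⟨H, hH, hcong, hHr, hmin⟩ := hr
  refine ⟨Set.image2 (fun p y ↦ (actA p.1 y, actA p.2 y)) H Y, hH.image2 _ Y.finite_toSet,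
    ⟨hcong.1, fun a b hab s ↦ hcong.2 a b hab (f s)⟩, ?_, ?_⟩
  · rintro _ ⟨p, hp, y, -, rfl⟩
    exact hcong.2 _ _ (hHr p hp) y
  · intro r' hr' hsub a b hab
    -- The largest `M`-congruence contained in the `S`-congruence `r'`.
    let core : A → A → Prop := fun a b ↦ ∀ m, r' (actA a m) (actA b m)
    have hcore : IsActCong actA core :=
      ⟨⟨fun _ _ ↦ hr'.1.refl _, fun h m ↦ hr'.1.symm (h m),
        fun h h' m ↦ hr'.1.trans (h m) (h' m)⟩,
        fun a b h n m ↦ by simpa only [hmul] using h (n * m)⟩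
    have hHcore : ∀ p ∈ H, core p.1 p.2 := fun p hp m ↦ by
      obtain ⟨y, hy, s, rfl⟩ := hY m
      simpa only [hmul] using hr'.2 _ _ (hsub _ ⟨p, hp, y, hy, rfl⟩) s
    simpa only [hone] using hmin core hcore hHcore a b hab 1

theorem ActFGCong.ker_of_comp {φ : B → A} {g : C → B} (hφ : IsActHom actB actA φ)
    (hg : IsActHom actC (restrictAct f actB) g) (hB : ActFG (restrictAct f actB))
    (hsurj : Function.Surjective (φ ∘ g)) (hker : ActFGCong actC (Setoid.ker (φ ∘ g))) :
    ActFGCong actB (Setoid.ker φ) := by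
  obtain ⟨Y, hY⟩ := hB
  obtain ⟨H, hH, -, hHker, hmin⟩ := hker
  choose c hc using fun b ↦ hsurj (φ b)
  refine ⟨Prod.map g g '' H ∪ (fun y ↦ (y, g (c y))) '' Y,
    (hH.image _).union (Y.finite_toSet.image _), hφ.isActCong_ker, ?_, ?_⟩
  · rintro _ (⟨p, hp, rfl⟩ | ⟨y, -, rfl⟩)
    · exact hHker p hp
    · exact (hc y).symm
  · intro r hr hsub a b hab
    have hφ_of_r : ∀ x y, φ (g x) = φ (g y) → r (g x) (g y) :=
      hmin _ (IsActCong.comap (actA := restrictAct f actB)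
        ⟨hr.1, fun _ _ h s ↦ hr.2 _ _ h (f s)⟩ hg) fun p hp ↦ hsub _ (.inl ⟨p, hp, rfl⟩)
    have hred : ∀ b, ∃ x, r b (g x) ∧ φ b = φ (g x) := fun b ↦ by
      obtain ⟨y, hy, s, rfl⟩ := hY b
      refine ⟨actC (c y) s, ?_, ?_⟩
      · simpa only [hg (c y) s] using hr.2 _ _ (hsub _ (.inr ⟨y, hy, rfl⟩)) (f s)
      · rw [hg, hφ, hφ]
        exact congrArg (actA · (f s)) (hc y).symm
    obtain ⟨x, hax, hx⟩ := hred a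
    obtain ⟨y, hby, hy⟩ := hred b
    have hxy : φ (g x) = φ (g y) := hx.symm.trans (hab.trans hy)
    exact hr.1.trans hax (hr.1.trans (hφ_of_r x y hxy) (hr.1.symm hby))

theorem ActFP.of_restrictAct (h : ActFP (restrictAct f actA))
    (hf : ActFG (fun (m : M) (s : S) ↦ m * f s))
    (hmul : ∀ (a : A) (m n : M), actA a (m * n) = actA (actA a m) n) : ActFP actA := by
  obtain ⟨n, ψ, hψ, hsurj, hker⟩ := actFP_iff_exists_surjective.1 h
  let g : Fin n × S → Fin n × M := Prod.map id f
  let φ : Fin n × M → A := fun p ↦ actA (ψ (p.1, 1)) p.2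
  have hφ : IsActHom (freeAct (Fin n) M) actA φ := fun p m ↦ hmul _ p.2 m
  have hg : IsActHom (freeAct (Fin n) S) (restrictAct f (freeAct (Fin n) M)) g :=
    fun p s ↦ congrArg (Prod.mk p.1) (f.map_mul p.2 s)
  have hφg : φ ∘ g = ψ := funext fun p ↦ by
    change actA (ψ (p.1, 1)) (f p.2) = ψ p
    simpa only [freeAct, one_mul] using (hψ (p.1, 1) p.2).symm
  rw [← hφg] at hsurj hker
  have hfree : ActFG (restrictAct f (freeAct (Fin n) M)) :=
    (actFP_freeAct (Fin n) M).actFG.restrictScalars hf freeAct_mul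
  exact (actFP_freeAct (Fin n) M).of_surjective hφ hsurj.of_comp
    (hker.ker_of_comp hφ hg hfree hsurj)

theorem ActFP.restrictScalars (h : ActFP actA) (hf : ActFP (fun (m : M) (s : S) ↦ m * f s)) :
    ActFP (restrictAct f actA) := by
  obtain ⟨n, φ, hφ, hsurj, hker⟩ := actFP_iff_exists_surjective.1 h
  have hfree : ActFP (restrictAct f (freeAct (Fin n) M)) := hf.finite_copower (Fin n)
  exact hfree.of_surjective (fun p s ↦ hφ p (f s)) hsurj
    (hker.restrictScalars hf.actFG freeAct_one freeAct_mul)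

theorem actFP_mul_inl (S T : Type*) [Monoid S] [Monoid T] [Finite T] :
    ActFP (fun (p : S × T) (s : S) ↦ p * MonoidHom.inl S T s) :=
  (actFP_freeAct T S).of_bijective (φ := Prod.swap) (fun p s ↦ by simp [Prod.ext_iff])
    Prod.swap_bijective

end RestrictionOfScalars

theorem stmt19_general {S M A : Type*} [Monoid S] [Monoid M] (f : S →* M)
    (hf : ActFP (fun (m : M) (s : S) ↦ m * f s)) (act : A → M → A)
    (hone : ∀ a : A, act a 1 = a)
    (hmul : ∀ (a : A) (m n : M), act a (m * n) = act (act a m) n) :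
    (∀ a : A, act a (f 1) = a) ∧
    (∀ (a : A) (s t : S), act a (f (s * t)) = act (act a (f s)) (f t)) ∧
    (ActFG (restrictAct f act) ↔ ActFG act) ∧
    (ActFP (restrictAct f act) ↔ ActFP act) :=
  ⟨fun a ↦ by rw [map_one, hone], fun a s t ↦ by rw [map_mul, hmul],
    ⟨fun h ↦ h.of_restrictAct, fun h ↦ h.restrictScalars hf.actFG hmul⟩,
    ⟨fun h ↦ h.of_restrictAct hf.actFG hmul, fun h ↦ h.restrictScalars hf⟩⟩

theorem stmt19 {S T A : Type*} [Monoid S] [Monoid T] [Finite T]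
    (act : A → S × T → A)
    (hone : ∀ a : A, act a 1 = a)
    (hmul : ∀ (a : A) (p q : S × T), act a (p * q) = act (act a p) q) :
    (∀ a : A, act a ((1 : S), (1 : T)) = a) ∧
    (∀ (a : A) (s t : S),
      act a (s * t, (1 : T)) = act (act a (s, (1 : T))) (t, (1 : T))) ∧
    (ActFG (fun (a : A) (s : S) => act a (s, 1)) ↔ ActFG act) ∧
    (ActFP (fun (a : A) (s : S) => act a (s, 1)) ↔ ActFP act) :=
  stmt19_general (MonoidHom.inl S T) (actFP_mul_inl S T) act hone hmul
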